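/- Let G be a finite abelian group with exp(G) = n, and let G₀ ⊆ G be a minimal non-half-factorial LCN-set with min Δ(G₀) = max Δ*(G). Then every atom A over G₀ with cross number k(A) = 1 satisfies |supp(A)| ≤ n/2. -/

import Mathlib

open Multiset

section Defs

variable {G : Type*} [AddCommGroup G]

/-- `S` is a zero-sum sequence over `G₀`: a multiset with entries in `G₀` and sum `0`. -/
def IsZeroSumSeq (G₀ : Set G) (S : Multiset G) : Prop :=
  (∀ x ∈ S, x ∈ G₀) ∧ S.sum = 0

/-- `S` is an atom over `G₀`: a nonempty zero-sum sequence over `G₀` that is not the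
union of two nonempty zero-sum sequences over `G₀`. -/
def IsAtomSeq (G₀ : Set G) (S : Multiset G) : Prop :=
  IsZeroSumSeq G₀ S ∧ S ≠ 0 ∧
    ∀ A B : Multiset G, IsZeroSumSeq G₀ A → IsZeroSumSeq G₀ B →
      A ≠ 0 → B ≠ 0 → S ≠ A + B

/-- The set of lengths of `B`: all `k` such that `B` is a union of `k` atoms over `G₀`. -/
def LengthSet (G₀ : Set G) (B : Multiset G) : Set ℕ :=
  {k | ∃ l : Multiset (Multiset G), Multiset.card l = k ∧
      (∀ A ∈ l, IsAtomSeq G₀ A) ∧ l.sum = B}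

/-- The set of successive distances of a set of naturals. -/
def DeltaOf (L : Set ℕ) : Set ℕ :=
  {d | ∃ x ∈ L, ∃ y ∈ L, x < y ∧ y - x = d ∧ ∀ z ∈ L, ¬(x < z ∧ z < y)}

/-- The set of distances `Δ(G₀)`. -/
def DeltaSet (G₀ : Set G) : Set ℕ :=
  {d | ∃ B : Multiset G, IsZeroSumSeq G₀ B ∧ B ≠ 0 ∧ d ∈ DeltaOf (LengthSet G₀ B)}

/-- `G₀` is half-factorial if `Δ(G₀) = ∅`. -/
def IsHalfFactorialSet (G₀ : Set G) : Prop := DeltaSet G₀ = ∅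

/-- `G₀` is minimal non-half-factorial if `Δ(G₀) ≠ ∅` and every proper subset is
half-factorial. -/
def IsMinNonHalfFactorial (G₀ : Set G) : Prop :=
  (DeltaSet G₀).Nonempty ∧ ∀ G₁ : Set G, G₁ ⊂ G₀ → DeltaSet G₁ = ∅

/-- The cross number `k(S) = Σ 1/ord(g)` of a multiset over `G`. -/
noncomputable def crossNumber (S : Multiset G) : ℚ :=
  (S.map (fun g => ((addOrderOf g : ℚ))⁻¹)).sum

/-- `G₀` is an LCN-set if every atom over `G₀` has cross number at least 1. -/
def IsLCNSet (G₀ : Set G) : Prop :=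
  ∀ U : Multiset G, IsAtomSeq G₀ U → 1 ≤ crossNumber U

/-- A subset of `G \ {0}` is independent if any integral linear relation on its elements
has all summands zero. -/
def IsIndependentSet (E : Set G) : Prop :=
  (0 : G) ∉ E ∧ ∀ s : Finset G, ↑s ⊆ E → ∀ f : G → ℤ,
    (∑ e ∈ s, f e • e) = 0 → ∀ e ∈ s, f e • e = 0

/-- `d` is a greatest common divisor of the set `S` of naturals. -/
def IsSetGcd (S : Set ℕ) (d : ℕ) : Prop :=
  (∀ s ∈ S, d ∣ s) ∧ ∀ e : ℕ, (∀ s ∈ S, e ∣ s) → e ∣ d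

end Defs

/-- The set of minimal distances `Δ*(G)`. -/
def DeltaStar (G : Type*) [AddCommGroup G] : Set ℕ :=
  {d | ∃ G₀ : Set G, (DeltaSet G₀).Nonempty ∧ d = sInf (DeltaSet G₀)}

/-- The `p`-rank of a finite abelian group: `log_p` of the order of the `p`-torsion
subgroup `{x | p • x = 0}`. -/
noncomputable def pRank (G : Type*) [AddCommGroup G] (p : ℕ) : ℕ :=
  Nat.log p (Nat.card {x : G // p • x = 0})

/-- The rank of a finite abelian group: the maximum of the `p`-ranks over all primes. -/
noncomputable def rankG (G : Type*) [AddCommGroup G] : ℕ :=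
  sSup {r : ℕ | ∃ p : ℕ, p.Prime ∧ r = pRank G p}

section Helpers
variable {G : Type*} [AddCommGroup G]

lemma crossNumber_add (S T : Multiset G) :
    crossNumber (S + T) = crossNumber S + crossNumber T := by
  simp [crossNumber]

lemma crossNumber_nsmul (k : ℕ) (S : Multiset G) :
    crossNumber (k • S) = k * crossNumber S := by
  simp [crossNumber, Multiset.map_nsmul, Multiset.sum_nsmul]

lemma crossNumber_zero : crossNumber (0 : Multiset G) = 0 := by simp [crossNumber]

lemma crossNumber_sum_ge (l : Multiset (Multiset G)) (h : ∀ U ∈ l, 1 ≤ crossNumber U) :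
    (Multiset.card l : ℚ) ≤ crossNumber l.sum := by
  induction l using Multiset.induction with
  | empty => simp [crossNumber_zero]
  | cons a s ih =>
    have h1 := h a (by simp)
    have h2 := ih (fun U hU => h U (by simp [hU]))
    simp only [Multiset.card_cons, Multiset.sum_cons, crossNumber_add]
    push_cast
    linarith

lemma crossNumber_sum_eq (l : Multiset (Multiset G)) (h : ∀ U ∈ l, crossNumber U = 1) :
    crossNumber l.sum = (Multiset.card l : ℚ) := by
  induction l using Multiset.induction with
  | empty => simp [crossNumber_zero]
  | cons a s ih =>
    have h1 := h a (by simp)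
    have h2 := ih (fun U hU => h U (by simp [hU]))
    simp only [Multiset.card_cons, Multiset.sum_cons, crossNumber_add, h1, h2]
    push_cast
    ring

lemma IsZeroSumSeq.add {G₀ : Set G} {S T : Multiset G} (hS : IsZeroSumSeq G₀ S)
    (hT : IsZeroSumSeq G₀ T) : IsZeroSumSeq G₀ (S + T) := by
  refine ⟨fun x hx => ?_, by simp [hS.2, hT.2]⟩
  rcases Multiset.mem_add.1 hx with h | h
  · exact hS.1 x h
  · exact hT.1 x h

lemma IsZeroSumSeq.nsmul {G₀ : Set G} {S : Multiset G} (hS : IsZeroSumSeq G₀ S) (k : ℕ) :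
    IsZeroSumSeq G₀ (k • S) := by
  induction k with
  | zero => simp [IsZeroSumSeq]
  | succ k ih => rw [succ_nsmul]; exact ih.add hS

lemma IsZeroSumSeq.msum {G₀ : Set G} (l : Multiset (Multiset G))
    (h : ∀ U ∈ l, IsZeroSumSeq G₀ U) : IsZeroSumSeq G₀ l.sum := by
  induction l using Multiset.induction with
  | empty => simp [IsZeroSumSeq]
  | cons a s ih =>
    rw [Multiset.sum_cons]
    exact (h a (by simp)).add (ih (fun U hU => h U (by simp [hU])))

lemma IsZeroSumSeq.of_add {G₀ : Set G} {S T : Multiset G} (h : IsZeroSumSeq G₀ (S + T))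
    (hS : S.sum = 0) : IsZeroSumSeq G₀ T := by
  refine ⟨fun x hx => h.1 x (by simp [hx]), ?_⟩
  have := h.2
  simpa [hS] using this

lemma fac_exists {G₀ : Set G} : ∀ (n : ℕ) (B : Multiset G), Multiset.card B = n →
    IsZeroSumSeq G₀ B →
    ∃ l : Multiset (Multiset G), (∀ A ∈ l, IsAtomSeq G₀ A) ∧ l.sum = B := by
  intro n
  induction n using Nat.strong_induction_on with
  | _ n ih =>
  intro B hn hB
  by_cases h0 : B = 0
  · exact ⟨0, by simp, by simp [h0]⟩
  by_cases hat : IsAtomSeq G₀ B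
  · exact ⟨{B}, by simpa using hat, by simp⟩
  · have : ∃ S T : Multiset G, IsZeroSumSeq G₀ S ∧ IsZeroSumSeq G₀ T ∧ S ≠ 0 ∧ T ≠ 0 ∧
        B = S + T := by
      by_contra hcon
      apply hat
      refine ⟨hB, h0, fun S T hS hT hS0 hT0 he => hcon ⟨S, T, hS, hT, hS0, hT0, he⟩⟩
    obtain ⟨S, T, hS, hT, hS0, hT0, he⟩ := this
    have c1 := Multiset.card_pos.2 hS0
    have c2 := Multiset.card_pos.2 hT0
    have c3 : Multiset.card B = Multiset.card S + Multiset.card T := by rw [he]; simp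
    obtain ⟨l1, h1, e1⟩ := ih (Multiset.card S) (by omega) S rfl hS
    obtain ⟨l2, h2, e2⟩ := ih (Multiset.card T) (by omega) T rfl hT
    refine ⟨l1 + l2, ?_, by simp [e1, e2, he]⟩
    intro A hA
    rcases Multiset.mem_add.1 hA with h | h
    · exact h1 A h
    · exact h2 A h

lemma IsAtomSeq.eq_of_le {G₀ : Set G} {V S : Multiset G} (hV : IsAtomSeq G₀ V)
    (hS0 : S ≠ 0) (hS : S.sum = 0) (hle : S ≤ V) : V = S := by
  obtain ⟨T, rfl⟩ := Multiset.le_iff_exists_add.1 hle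
  by_contra hne
  have hT0 : T ≠ 0 := by
    rintro rfl
    simp at hne
  refine hV.2.2 S T ⟨fun x hx => hV.1.1 x (by simp [hx]), hS⟩ (hV.1.of_add hS) hS0 hT0 rfl

lemma atom_fac_card {G₀ : Set G} {V : Multiset G} (hV : IsAtomSeq G₀ V)
    (l : Multiset (Multiset G)) (hl : ∀ U ∈ l, IsAtomSeq G₀ U) (hs : l.sum = V) :
    Multiset.card l = 1 := by
  induction l using Multiset.induction with
  | empty => exact absurd hs.symm hV.2.1
  | cons a s ih =>
    have ha := hl a (by simp)
    have hVa : V = a := hV.eq_of_le ha.2.1 ha.1.2 (by rw [← hs]; simp)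
    have hs0 : s.sum = 0 := by
      rw [Multiset.sum_cons, hVa] at hs
      simpa using hs
    have : s = 0 := by
      by_contra hne
      obtain ⟨b, hb⟩ := Multiset.exists_mem_of_ne_zero hne
      have hb' := hl b (by simp [hb])
      have : b ≤ s.sum := by
        obtain ⟨t, rfl⟩ := Multiset.exists_cons_of_mem hb
        simp
      rw [hs0] at this
      exact hb'.2.1 (by simpa using this)
    simp [this]

lemma exists_delta {G₀ : Set G} {B : Multiset G} {x y : ℕ} (hx : x ∈ LengthSet G₀ B)
    (hy : y ∈ LengthSet G₀ B) (hxy : x < y) : ∃ d ∈ DeltaSet G₀, d ≤ y - x := by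
  classical
  have hex : ∃ z, z ∈ LengthSet G₀ B ∧ x < z := ⟨y, hy, hxy⟩
  have hz := Nat.find_spec hex
  have hzy : Nat.find hex ≤ y := Nat.find_min' hex ⟨hy, hxy⟩
  refine ⟨Nat.find hex - x, ⟨B, ?_, ?_, x, hx, Nat.find hex, hz.1, hz.2, rfl, ?_⟩, by omega⟩
  · obtain ⟨l, _, hl, rfl⟩ := hx
    exact IsZeroSumSeq.msum l (fun U hU => (hl U hU).1)
  · rintro rfl
    obtain ⟨l, hc, hl, hs⟩ := hy
    have : l ≠ 0 := by
      rintro rfl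
      simp at hc
      omega
    obtain ⟨b, hb⟩ := Multiset.exists_mem_of_ne_zero this
    have hle : b ≤ l.sum := by
      obtain ⟨t, rfl⟩ := Multiset.exists_cons_of_mem hb
      simp
    rw [hs] at hle
    exact (hl b hb).2.1 (by simpa using hle)
  · rintro z hzL ⟨h1, h2⟩
    exact Nat.find_min hex h2 ⟨hzL, h1⟩

lemma IsAtomSeq.mono {G₀ G₁ : Set G} (h : G₁ ⊆ G₀) {U : Multiset G} (hU : IsAtomSeq G₁ U) :
    IsAtomSeq G₀ U := by
  refine ⟨⟨fun x hx => h (hU.1.1 x hx), hU.1.2⟩, hU.2.1, ?_⟩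
  rintro A B hA hB hA0 hB0 rfl
  exact hU.2.2 A B ⟨fun x hx => hU.1.1 x (by simp [hx]), hA.2⟩
    ⟨fun x hx => hU.1.1 x (by simp [hx]), hB.2⟩ hA0 hB0 rfl

lemma IsAtomSeq.restrict {G₀ G₁ : Set G} {U : Multiset G} (hU : IsAtomSeq G₀ U)
    (h : ∀ x ∈ U, x ∈ G₁) : IsAtomSeq G₁ U := by
  refine ⟨⟨h, hU.1.2⟩, hU.2.1, ?_⟩
  rintro A B hA hB hA0 hB0 rfl
  exact hU.2.2 A B ⟨fun x hx => hU.1.1 x (by simp [hx]), hA.2⟩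
    ⟨fun x hx => hU.1.1 x (by simp [hx]), hB.2⟩ hA0 hB0 rfl

lemma atom_replicate [Finite G] {G₀ : Set G} {x : G} (hx : x ∈ G₀) :
    IsAtomSeq G₀ (Multiset.replicate (addOrderOf x) x) := by
  have hpos := addOrderOf_pos x
  refine ⟨⟨fun y hy => by rw [Multiset.eq_of_mem_replicate hy]; exact hx, ?_⟩, ?_, ?_⟩
  · simp [addOrderOf_nsmul_eq_zero]
  · intro h
    have := congrArg Multiset.card h
    rw [Multiset.card_replicate, Multiset.card_zero] at this
    omega
  · intro A B hA hB hA0 hB0 he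
    have key : ∀ C : Multiset G, C ≤ Multiset.replicate (addOrderOf x) x → C.sum = 0 → C ≠ 0 →
        addOrderOf x ≤ Multiset.card C := by
      intro C hC hs h0
      have : C = Multiset.replicate (Multiset.card C) x :=
        Multiset.eq_replicate_card.2 fun b hb =>
          Multiset.eq_of_mem_replicate (Multiset.mem_of_le hC hb)
      rw [this, Multiset.sum_replicate] at hs
      exact Nat.le_of_dvd (Multiset.card_pos.2 h0) (addOrderOf_dvd_of_nsmul_eq_zero hs)
    have k1 := key A (by rw [he]; simp) hA.2 hA0
    have k2 := key B (by rw [he]; simp) hB.2 hB0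
    have := congrArg Multiset.card he
    simp at this
    omega

lemma crossNumber_replicate [Finite G] (x : G) :
    crossNumber (Multiset.replicate (addOrderOf x) x) = 1 := by
  have hpos := addOrderOf_pos x
  simp only [crossNumber, Multiset.map_replicate, Multiset.sum_replicate, nsmul_eq_mul]
  field_simp

lemma fac_nsmul [Finite G] {G₀ : Set G} (U : Multiset G) (hU : ∀ x ∈ U, x ∈ G₀) :
    ∃ l : Multiset (Multiset G), (∀ A ∈ l, IsAtomSeq G₀ A) ∧ (∀ A ∈ l, crossNumber A = 1) ∧
      l.sum = AddMonoid.exponent G • U := by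
  induction U using Multiset.induction with
  | empty => exact ⟨0, by simp, by simp, by simp⟩
  | cons a s ih =>
    obtain ⟨l, h1, h2, h3⟩ := ih (fun x hx => hU x (by simp [hx]))
    obtain ⟨c, hc⟩ := AddMonoid.addOrder_dvd_exponent a
    refine ⟨Multiset.replicate c (Multiset.replicate (addOrderOf a) a) + l, ?_, ?_, ?_⟩
    · intro A hA
      rcases Multiset.mem_add.1 hA with h | h
      · rw [Multiset.eq_of_mem_replicate h]; exact atom_replicate (hU a (by simp))
      · exact h1 A h
    · intro A hA
      rcases Multiset.mem_add.1 hA with h | h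
      · rw [Multiset.eq_of_mem_replicate h]; exact crossNumber_replicate a
      · exact h2 A h
    · rw [Multiset.sum_add, h3, Multiset.sum_replicate, ← Multiset.singleton_add, nsmul_add, hc,
        Multiset.nsmul_singleton, ← Multiset.nsmul_singleton, smul_smul, mul_comm,
        Multiset.nsmul_singleton]

lemma cross_one_of_hf [Finite G] {G₁ : Set G} (h : DeltaSet G₁ = ∅) {U : Multiset G}
    (hU : IsAtomSeq G₁ U) : crossNumber U = 1 := by
  obtain ⟨l, h1, h2, h3⟩ := fac_nsmul (G₀ := G₁) U hU.1.1
  have hpos : 0 < AddMonoid.exponent G := AddMonoid.exponent_pos.2 AddMonoid.ExponentExists.of_finite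
  have hc := crossNumber_sum_eq l h2
  rw [h3, crossNumber_nsmul] at hc
  have m1 : Multiset.card l ∈ LengthSet G₁ (AddMonoid.exponent G • U) := ⟨l, rfl, h1, h3⟩
  have m2 : AddMonoid.exponent G ∈ LengthSet G₁ (AddMonoid.exponent G • U) :=
    ⟨Multiset.replicate (AddMonoid.exponent G) U, by simp,
      fun A hA => by rw [Multiset.eq_of_mem_replicate hA]; exact hU, by simp⟩
  have heq : Multiset.card l = AddMonoid.exponent G := by
    rcases lt_trichotomy (Multiset.card l) (AddMonoid.exponent G) with hlt | he | hlt
    · obtain ⟨d, hd, _⟩ := exists_delta m1 m2 hlt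
      simp [h] at hd
    · exact he
    · obtain ⟨d, hd, _⟩ := exists_delta m2 m1 hlt
      simp [h] at hd
  rw [heq] at hc
  have hpos' : (0 : ℚ) < AddMonoid.exponent G := by exact_mod_cast hpos
  have : (AddMonoid.exponent G : ℚ) * (crossNumber U - 1) = 0 := by linarith
  rcases mul_eq_zero.1 this with h | h
  · linarith
  · linarith

lemma cover_lemma [DecidableEq G] (l : Multiset (Multiset G)) : ∀ A : Multiset G, A ≤ l.sum →
    ∃ l' ≤ l, Multiset.card l' ≤ Multiset.card A ∧ A ≤ l'.sum := by
  induction l using Multiset.induction with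
  | empty =>
    intro A hA
    exact ⟨0, le_refl _, by simp, hA⟩
  | cons U s ih =>
    intro A hA
    rw [Multiset.sum_cons] at hA
    obtain ⟨l', h1, h2, h3⟩ := ih (A - U) (by rw [tsub_le_iff_left]; exact hA)
    by_cases hz : A ∩ U = 0
    · have hAU : A - U = A := by
        have := Multiset.sub_add_inter A U
        rw [hz, add_zero] at this
        exact this
      rw [hAU] at h2 h3
      exact ⟨l', h1.trans (Multiset.le_cons_self _ _), h2, h3⟩
    · refine ⟨U ::ₘ l', Multiset.cons_le_cons _ h1, ?_, ?_⟩
      · have := congrArg Multiset.card (Multiset.sub_add_inter A U)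
        have h5 := Multiset.card_pos.2 hz
        rw [Multiset.card_add] at this
        rw [Multiset.card_cons]
        omega
      · rw [Multiset.sum_cons, ← tsub_le_iff_left]
        exact h3

lemma cover_lemma2 [DecidableEq G] (l : Multiset (Multiset G)) (A U : Multiset G)
    (hA : A ≤ l.sum) (hU : U ∈ l) :
    ∃ l' ≤ l, Multiset.card l' + Multiset.card (A ∩ U) ≤ Multiset.card A + 1 ∧ A ≤ l'.sum := by
  obtain ⟨s, rfl⟩ := Multiset.exists_cons_of_mem hU
  rw [Multiset.sum_cons] at hA
  obtain ⟨l', h1, h2, h3⟩ := cover_lemma s (A - U) (by rw [tsub_le_iff_left]; exact hA)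
  refine ⟨U ::ₘ l', Multiset.cons_le_cons _ h1, ?_, ?_⟩
  · have := congrArg Multiset.card (Multiset.sub_add_inter A U)
    rw [Multiset.card_add] at this
    rw [Multiset.card_cons]
    omega
  · rw [Multiset.sum_cons, ← tsub_le_iff_left]
    exact h3

lemma atom_pm [Finite G] {g : G} {U : Multiset G} (hU : IsAtomSeq ({g, -g} : Set G) U) :
    U = {g, -g} ∨ U = Multiset.replicate (addOrderOf g) g ∨
      U = Multiset.replicate (addOrderOf g) (-g) := by
  by_cases h1 : g ∈ U
  · by_cases h2 : -g ∈ U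
    · by_cases hne : g = -g
      · right; left
        have hr : U = Multiset.replicate (Multiset.card U) g :=
          Multiset.eq_replicate_card.2 fun b hb => by
            rcases hU.1.1 b hb with h | h
            · exact h
            · rw [hne]; exact h
        have hs := hU.1.2
        rw [hr, Multiset.sum_replicate] at hs
        have hle := Nat.le_of_dvd (Multiset.card_pos.2 hU.2.1) (addOrderOf_dvd_of_nsmul_eq_zero hs)
        refine hU.eq_of_le (atom_replicate (G₀ := {g, -g}) (by simp)).2.1
          (atom_replicate (G₀ := {g, -g}) (by simp)).1.2 ?_
        rw [hr]
        exact (Multiset.replicate_le_replicate g).2 hle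
      · left
        refine hU.eq_of_le (by simp) (by simp) ?_
        obtain ⟨t, rfl⟩ := Multiset.exists_cons_of_mem h1
        refine Multiset.cons_le_cons _ ?_
        rw [Multiset.singleton_le]
        rcases Multiset.mem_cons.1 h2 with h | h
        · exact absurd h.symm hne
        · exact h
    · right; left
      have hr : U = Multiset.replicate (Multiset.card U) g :=
        Multiset.eq_replicate_card.2 fun b hb => by
          rcases hU.1.1 b hb with h | h
          · exact h
          · exact absurd (h ▸ hb) h2
      have hs := hU.1.2
      rw [hr, Multiset.sum_replicate] at hs
      have hle := Nat.le_of_dvd (Multiset.card_pos.2 hU.2.1) (addOrderOf_dvd_of_nsmul_eq_zero hs)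
      refine hU.eq_of_le (atom_replicate (G₀ := {g, -g}) (by simp)).2.1
        (atom_replicate (G₀ := {g, -g}) (by simp)).1.2 ?_
      rw [hr]
      exact (Multiset.replicate_le_replicate g).2 hle
  · right; right
    have hr : U = Multiset.replicate (Multiset.card U) (-g) :=
      Multiset.eq_replicate_card.2 fun b hb => by
        rcases hU.1.1 b hb with h | h
        · exact absurd (h ▸ hb) h1
        · exact h
    have hs := hU.1.2
    rw [hr, Multiset.sum_replicate] at hs
    have hle := Nat.le_of_dvd (Multiset.card_pos.2 hU.2.1) (addOrderOf_dvd_of_nsmul_eq_zero hs)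
    rw [addOrderOf_neg] at hle
    have hat := atom_replicate (G₀ := ({g, -g} : Set G)) (x := -g) (by simp)
    rw [addOrderOf_neg] at hat
    refine hU.eq_of_le hat.2.1 hat.1.2 ?_
    rw [hr]
    exact (Multiset.replicate_le_replicate (-g)).2 hle

/-- Counting in factorizations over `{g, -g}`. -/
lemma fac_pm [Finite G] [DecidableEq G] {g : G} (hne : g ≠ -g) (l : Multiset (Multiset G))
    (hl : ∀ U ∈ l, IsAtomSeq ({g, -g} : Set G) U) :
    ∃ x y z : ℕ, Multiset.card l = x + y + z ∧ Multiset.count g l.sum = addOrderOf g * x + z ∧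
      Multiset.count (-g) l.sum = addOrderOf g * y + z := by
  induction l using Multiset.induction with
  | empty => exact ⟨0, 0, 0, by simp⟩
  | cons U s ih =>
    obtain ⟨x, y, z, h1, h2, h3⟩ := ih (fun V hV => hl V (by simp [hV]))
    rw [Multiset.card_cons, Multiset.sum_cons, Multiset.count_add, Multiset.count_add, h1, h2, h3]
    rcases atom_pm (hl U (by simp)) with h | h | h
    · refine ⟨x, y, z + 1, by ring, ?_, ?_⟩
      · rw [h]
        have : Multiset.count g ({g, -g} : Multiset G) = 1 := by
          simp [Multiset.count_cons, Multiset.count_singleton, hne]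
        rw [this]; ring
      · rw [h]
        have : Multiset.count (-g) ({g, -g} : Multiset G) = 1 := by
          simp [Multiset.count_cons, Multiset.count_singleton, hne.symm]
        rw [this]; ring
    · refine ⟨x + 1, y, z, by ring, ?_, ?_⟩
      · rw [h, Multiset.count_replicate_self]; ring
      · rw [h, Multiset.count_replicate, if_neg hne]; ring
    · refine ⟨x, y + 1, z, by ring, ?_, ?_⟩
      · rw [h, Multiset.count_replicate, if_neg hne.symm]; ring
      · rw [h, Multiset.count_replicate_self]; ring

lemma delta_star_ge (G : Type*) [AddCommGroup G] [Finite G] (hn : 3 ≤ AddMonoid.exponent G) :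
    AddMonoid.exponent G ≤ sSup (DeltaStar G) + 2 := by
  classical
  obtain ⟨g, hg⟩ := AddMonoid.exists_addOrderOf_eq_exponent (G := G)
    AddMonoid.ExponentExists.of_finite
  set n := AddMonoid.exponent G with hndef
  have hne : g ≠ -g := by
    intro h
    have h2 : 2 • g = 0 := by
      rw [two_nsmul]
      nth_rewrite 1 [h]
      simp
    have := Nat.le_of_dvd (by norm_num) (addOrderOf_dvd_of_nsmul_eq_zero h2)
    omega
  have hbdd : BddAbove (DeltaStar G) := by
    apply Set.Finite.bddAbove
    apply (Set.finite_range (fun G₀ : Set G => sInf (DeltaSet G₀))).subset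
    rintro d ⟨G₀, _, rfl⟩
    exact ⟨G₀, rfl⟩
  have hnon : (DeltaSet ({g, -g} : Set G)).Nonempty := by
    have e1 : (2 : ℕ) ∈ LengthSet ({g, -g} : Set G) (n • ({g, -g} : Multiset G)) := by
      refine ⟨{Multiset.replicate (addOrderOf g) g, Multiset.replicate (addOrderOf (-g)) (-g)},
        by simp, ?_, ?_⟩
      · intro A hA
        simp only [Multiset.insert_eq_cons, Multiset.mem_cons, Multiset.mem_singleton] at hA
        rcases hA with rfl | rfl
        · exact atom_replicate (by simp)
        · exact atom_replicate (by simp)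
      · rw [addOrderOf_neg, hg]
        simp [Multiset.insert_eq_cons, ← Multiset.singleton_add, nsmul_add,
          Multiset.nsmul_singleton]
    have e2 : n ∈ LengthSet ({g, -g} : Set G) (n • ({g, -g} : Multiset G)) := by
      refine ⟨Multiset.replicate n {g, -g}, by simp, ?_, by simp⟩
      intro A hA
      rw [Multiset.eq_of_mem_replicate hA]
      refine ⟨⟨by simp, by simp⟩, by simp, ?_⟩
      intro A B hA hB hA0 hB0 he
      have key : ∀ C : Multiset G, IsZeroSumSeq ({g, -g} : Set G) C → C ≠ 0 →
          2 ≤ Multiset.card C := by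
        intro C hC hC0
        by_contra hlt
        have := Multiset.card_pos.2 hC0
        obtain ⟨a, rfl⟩ := Multiset.card_eq_one.1 (by omega : Multiset.card C = 1)
        have ha : a = 0 := by simpa using hC.2
        have ha2 := hC.1 a (by simp)
        have hg0 : g = 0 := by
          rcases ha2 with h | h
          · rw [← h, ha]
          · have h' : a = -g := h
            rw [ha] at h'
            exact (neg_eq_zero.1 h'.symm)
        rw [hg0] at hne
        simp at hne
      have k1 := key A hA hA0
      have k2 := key B hB hB0
      have := congrArg Multiset.card he
      simp at this
      omega
    obtain ⟨d, hd, _⟩ := exists_delta e1 e2 (by omega)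
    exact ⟨d, hd⟩
  have hmem : sInf (DeltaSet ({g, -g} : Set G)) ∈ DeltaStar G := ⟨_, hnon, rfl⟩
  have hle := le_csSup hbdd hmem
  obtain ⟨B, hB, hB0, u, ⟨l1, c1, a1, s1⟩, v, ⟨l2, c2, a2, s2⟩, huv, hd, _⟩ := Nat.sInf_mem hnon
  obtain ⟨x, y, z, p1, p2, p3⟩ := fac_pm hne l1 a1
  obtain ⟨x', y', z', q1, q2, q3⟩ := fac_pm hne l2 a2
  rw [s1, hg] at p2 p3
  rw [s2, hg] at q2 q3
  have hge : n ≤ (v - u) + 2 := by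
    obtain ⟨m, hm⟩ : ∃ m, n = m + 2 := ⟨n - 2, by omega⟩
    have e1 : (n : ℤ) * x + z = n * x' + z' := by exact_mod_cast p2.symm.trans q2
    have e2 : (n : ℤ) * y + z = n * y' + z' := by exact_mod_cast p3.symm.trans q3
    have e3 : (n : ℤ) * ((x : ℤ) - x') = n * ((y : ℤ) - y') := by linarith
    have hn0 : (n : ℤ) ≠ 0 := by omega
    have e4 := mul_left_cancel₀ hn0 e3
    have e5 : (v : ℤ) - u = (n - 2) * ((x : ℤ) - x') := by
      have : (u : ℤ) = x + y + z := by exact_mod_cast c1.symm.trans p1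
      have : (v : ℤ) = x' + y' + z' := by exact_mod_cast c2.symm.trans q1
      linarith
    have e6 : 0 < (x : ℤ) - x' := by
      by_contra hcon
      have : (n - 2 : ℤ) * ((x : ℤ) - x') ≤ 0 :=
        mul_nonpos_of_nonneg_of_nonpos (by omega) (by omega)
      omega
    have e7 : (n - 2 : ℤ) * 1 ≤ (n - 2) * ((x : ℤ) - x') :=
      mul_le_mul_of_nonneg_left (by omega) (by omega)
    omega
  omega

lemma card_le_exponent [Finite G] (A : Multiset G) :
    (Multiset.card A : ℚ) ≤ AddMonoid.exponent G * crossNumber A := by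
  have hpos : 0 < AddMonoid.exponent G := AddMonoid.exponent_pos.2 AddMonoid.ExponentExists.of_finite
  have hpos' : (0 : ℚ) < AddMonoid.exponent G := by exact_mod_cast hpos
  induction A using Multiset.induction with
  | empty => simp [crossNumber]
  | cons a s ih =>
    have h1 : crossNumber (a ::ₘ s) = (addOrderOf a : ℚ)⁻¹ + crossNumber s := by
      simp [crossNumber]
    rw [h1, Multiset.card_cons, mul_add]
    push_cast
    have ho : (0 : ℚ) < addOrderOf a := by exact_mod_cast addOrderOf_pos a
    have hle : (addOrderOf a : ℚ) ≤ AddMonoid.exponent G := by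
      exact_mod_cast Nat.le_of_dvd hpos (AddMonoid.addOrder_dvd_exponent a)
    have : (1 : ℚ) ≤ AddMonoid.exponent G * (addOrderOf a : ℚ)⁻¹ := by
      rw [← div_eq_mul_inv, le_div_iff₀ ho]
      linarith
    linarith

end Helpers

/-- If `G₀` is a minimal non-half-factorial LCN-set with
`min Δ(G₀) = max Δ*(G)`, then every atom `A` over `G₀` with `k(A) = 1` satisfies
`|supp(A)| ≤ exp(G)/2`. -/
theorem stmt_13 {G : Type*} [AddCommGroup G] [Fintype G] [DecidableEq G] (G₀ : Set G)
    (hmin : IsMinNonHalfFactorial G₀) (hLCN : IsLCNSet G₀)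
    (hmax : sInf (DeltaSet G₀) = sSup (DeltaStar G)) :
    ∀ A : Multiset G, IsAtomSeq G₀ A → crossNumber A = 1 →
      (A.toFinset.card : ℚ) ≤ (AddMonoid.exponent G : ℚ) / 2 := by
  intro A hA hkA
  by_contra hcon
  push Not at hcon
  have hpos : 0 < AddMonoid.exponent G := AddMonoid.exponent_pos.2 AddMonoid.ExponentExists.of_finite
  have hposQ : (0 : ℚ) < AddMonoid.exponent G := by exact_mod_cast hpos
  have hcardA : Multiset.card A ≤ AddMonoid.exponent G := by
    have := card_le_exponent A
    rw [hkA, mul_one] at this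
    exact_mod_cast this
  have hcon' : AddMonoid.exponent G < 2 * A.toFinset.card := by
    have : (AddMonoid.exponent G : ℚ) < 2 * A.toFinset.card := by linarith
    exact_mod_cast this
  have hnexp : ∀ x : G, AddMonoid.exponent G • x = 0 := AddMonoid.exponent_nsmul_eq_zero
  -- an atom of cross number greater than one
  have hW : ∃ W, IsAtomSeq G₀ W ∧ 1 < crossNumber W := by
    by_contra hno
    push Not at hno
    have hall : ∀ U, IsAtomSeq G₀ U → crossNumber U = 1 :=
      fun U hU => le_antisymm (hno U hU) (hLCN U hU)
    obtain ⟨d, B, _, _, x, ⟨l1, c1, a1, s1⟩, y, ⟨l2, c2, a2, s2⟩, hxy, _⟩ := hmin.1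
    have k1 := crossNumber_sum_eq l1 (fun U hU => hall U (a1 U hU))
    have k2 := crossNumber_sum_eq l2 (fun U hU => hall U (a2 U hU))
    rw [s1] at k1
    rw [s2, k1] at k2
    have : Multiset.card l1 = Multiset.card l2 := by exact_mod_cast k2
    omega
  obtain ⟨W, hWat, hkW⟩ := hW
  have hn3 : 3 ≤ AddMonoid.exponent G := by
    by_contra hlt
    rcases (by omega : AddMonoid.exponent G = 1 ∨ AddMonoid.exponent G = 2) with h | h
    · obtain ⟨x, hx⟩ := Multiset.exists_mem_of_ne_zero hWat.2.1
      have hall : ∀ y : G, y = 0 := fun y => by simpa [h] using hnexp y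
      have he := hWat.eq_of_le (S := {x}) (by simp) (by simpa using hall x) (by simpa using hx)
      rw [he, hall x] at hkW
      simp [crossNumber] at hkW
    · have : 1 < A.toFinset.card := by omega
      obtain ⟨x, hx, y, hy, hxy⟩ := Finset.one_lt_card.1 this
      rw [Multiset.mem_toFinset] at hx hy
      have hle : ({x, y} : Multiset G) ≤ A := by
        obtain ⟨t, rfl⟩ := Multiset.exists_cons_of_mem hx
        refine Multiset.cons_le_cons _ ?_
        rw [Multiset.singleton_le]
        rcases Multiset.mem_cons.1 hy with h | h
        · exact absurd h.symm hxy
        · exact h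
      have he : ({x, y} : Multiset G) = A := Multiset.eq_of_le_of_card_le hle (by simp; omega)
      have hs := hA.1.2
      rw [← he] at hs
      have hs' : x + y = 0 := by simpa using hs
      have hx2 : x + x = 0 := by simpa [h, two_nsmul] using hnexp x
      exact hxy (add_left_cancel (hx2.trans hs'.symm))
  have hd : AddMonoid.exponent G ≤ sInf (DeltaSet G₀) + 2 := by
    rw [hmax]; exact delta_star_ge G hn3
  set n := AddMonoid.exponent G with hndef
  have hgap : ∀ (B : Multiset G) (x y : ℕ), x ∈ LengthSet G₀ B → y ∈ LengthSet G₀ B → x < y →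
      n + x ≤ y + 2 := by
    intro B x y hx hy hxy
    obtain ⟨d, hdm, hle⟩ := exists_delta hx hy hxy
    have := Nat.sInf_le hdm
    omega
  -- atoms missing an element of `G₀` have cross number one
  have hmiss : ∀ g ∈ G₀, ∀ U, IsAtomSeq (G₀ \ {g}) U → crossNumber U = 1 := by
    intro g hg U hU
    refine cross_one_of_hf (hmin.2 (G₀ \ {g}) ⟨Set.sdiff_subset, ?_⟩) hU
    intro h
    exact (h hg).2 rfl
  -- the distinguished element
  have hh : ∃ h ∈ A, Multiset.count h A = 1 ∧ addOrderOf h = n := by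
    by_contra hno
    push Not at hno
    have hsum : crossNumber A = ∑ g ∈ A.toFinset, (Multiset.count g A : ℚ) * (addOrderOf g : ℚ)⁻¹ := by
      rw [crossNumber, Finset.sum_multiset_map_count]
      simp
    have hge : ∑ g ∈ A.toFinset, (2 / n : ℚ) ≤
        ∑ g ∈ A.toFinset, (Multiset.count g A : ℚ) * (addOrderOf g : ℚ)⁻¹ := by
      refine Finset.sum_le_sum fun g hg => ?_
      rw [Multiset.mem_toFinset] at hg
      have hc := Multiset.count_pos.2 hg
      have ho := addOrderOf_pos g
      obtain ⟨c, hc'⟩ := AddMonoid.addOrder_dvd_exponent g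
      have hc0 : 0 < c := by
        rcases Nat.eq_zero_or_pos c with h | h
        · rw [h] at hc'; omega
        · exact h
      have h2 : 2 ≤ Multiset.count g A * c := by
        by_contra hlt
        have h1 : Multiset.count g A * c = 1 := by
          have := Nat.mul_pos hc hc0
          omega
        have hc1 := Nat.eq_one_of_mul_eq_one_right h1
        have hc2 := Nat.eq_one_of_mul_eq_one_left h1
        apply hno g hg hc1
        rw [hndef, hc', hc2, mul_one]
      have hnq : (n : ℚ) = addOrderOf g * c := by exact_mod_cast hc'
      have hoq : (0 : ℚ) < addOrderOf g := by exact_mod_cast ho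
      rw [← div_eq_mul_inv, div_le_div_iff₀ hposQ hoq, hnq]
      have h2q : (2 : ℚ) ≤ Multiset.count g A * c := by exact_mod_cast h2
      nlinarith
    rw [← hsum, hkA, Finset.sum_const, nsmul_eq_mul] at hge
    have : (A.toFinset.card : ℚ) * 2 ≤ n := by
      have h := mul_le_mul_of_nonneg_right hge hposQ.le
      have e : (A.toFinset.card : ℚ) * (2 / n) * n = A.toFinset.card * 2 := by
        field_simp
      rw [e] at h
      linarith
    linarith
  obtain ⟨h, hhA, hcount, hord⟩ := hh
  have hhG : h ∈ G₀ := hA.1.1 h hhA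
  obtain ⟨b, hbA, hbh⟩ : ∃ b ∈ A, b ≠ h := by
    have : 1 < A.toFinset.card := by omega
    obtain ⟨b, hb, hbh⟩ := Finset.exists_mem_ne this h
    exact ⟨b, Multiset.mem_toFinset.1 hb, hbh⟩
  have hbG : b ∈ G₀ := hA.1.1 b hbA
  -- existence of `j`
  have hP : ∃ j : ℕ, ∃ l : Multiset (Multiset G), (∀ U ∈ l, IsAtomSeq G₀ U) ∧
      l.sum = j • A + W ∧ j + 1 < Multiset.card l := by
    set m := Multiset.count h W with hm
    set X := ((n - 1) * m) • A + W with hX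
    have hcX : Multiset.count h X = n * m := by
      rw [hX, Multiset.count_add, Multiset.count_nsmul, hcount, ← hm]
      obtain ⟨k, hk⟩ : ∃ k, n = k + 1 := ⟨n - 1, by omega⟩
      rw [hk]; simp; ring
    have hle : Multiset.replicate (n * m) h ≤ X := Multiset.le_count_iff_replicate_le.1 hcX.ge
    obtain ⟨Y, hY⟩ := Multiset.le_iff_exists_add.1 hle
    have hXz : IsZeroSumSeq G₀ X := (hA.1.nsmul _).add hWat.1
    have hrs : (Multiset.replicate (n * m) h).sum = 0 := by
      rw [Multiset.sum_replicate, mul_comm, mul_smul, hnexp, smul_zero]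
    have hYz : IsZeroSumSeq G₀ Y := by
      rw [hY] at hXz
      exact hXz.of_add hrs
    have hYh : h ∉ Y := by
      have := congrArg (Multiset.count h) hY
      rw [hcX, Multiset.count_add, Multiset.count_replicate_self] at this
      exact Multiset.count_eq_zero.1 (by omega)
    obtain ⟨l1, a1, s1⟩ := fac_exists (G₀ := G₀ \ {b}) _ (Multiset.replicate (n * m) h) rfl
      ⟨fun x hx => by
        rw [Multiset.eq_of_mem_replicate hx]
        exact ⟨hhG, fun h' => hbh h'.symm⟩, hrs⟩
    obtain ⟨l2, a2, s2⟩ := fac_exists (G₀ := G₀ \ {h}) _ Y rfl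
      ⟨fun x hx => ⟨hYz.1 x hx, fun h' => hYh (by
        have h'' : x = h := h'
        rw [← h'']; exact hx)⟩, hYz.2⟩
    refine ⟨(n - 1) * m, l1 + l2, ?_, ?_, ?_⟩
    · intro U hU
      rcases Multiset.mem_add.1 hU with h' | h'
      · exact (a1 U h').mono Set.sdiff_subset
      · exact (a2 U h').mono Set.sdiff_subset
    · rw [Multiset.sum_add, s1, s2, ← hY]
    · have hk := crossNumber_sum_eq (l1 + l2) (fun U hU => by
        rcases Multiset.mem_add.1 hU with h' | h'
        · exact hmiss b hbG U (a1 U h')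
        · exact hmiss h hhG U (a2 U h'))
      rw [Multiset.sum_add, s1, s2, ← hY, hX, crossNumber_add, crossNumber_nsmul, hkA, mul_one] at hk
      have : ((((n - 1) * m : ℕ) : ℚ) + 1) < (Multiset.card (l1 + l2) : ℚ) := by linarith
      exact_mod_cast this
  classical
  obtain ⟨l, hl, hls, hlc⟩ := Nat.find_spec hP
  have hfmin := fun k => Nat.find_min hP (m := k)
  set j := Nat.find hP with hj
  clear_value j
  have hj0 : j ≠ 0 := by
    rintro rfl
    have := atom_fac_card hWat l hl (by simpa using hls)
    omega
  obtain ⟨j', rfl⟩ := Nat.exists_eq_succ_of_ne_zero hj0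
  have hnP := hfmin j' (Nat.lt_succ_self _)
  push Not at hnP
  have hlen1 : j' + 1 + 1 ∈ LengthSet G₀ ((j' + 1) • A + W) := by
    refine ⟨Multiset.replicate (j' + 1) A + {W}, by simp, ?_, by
      simp only [Multiset.sum_add, Multiset.sum_replicate, Multiset.sum_singleton]⟩
    intro U hU
    rcases Multiset.mem_add.1 hU with h' | h'
    · rw [Multiset.eq_of_mem_replicate h']; exact hA
    · rw [Multiset.mem_singleton.1 h']; exact hWat
  have hlen2 : Multiset.card l ∈ LengthSet G₀ ((j' + 1) • A + W) := ⟨l, rfl, hl, hls⟩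
  have ht := hgap _ _ _ hlen1 hlen2 hlc
  -- the key fact on covers
  have hcov : ∀ l' ≤ l, A ≤ l'.sum → n ≤ Multiset.card l' ∧
      (Multiset.card l' ≤ n → ∃ V, IsAtomSeq G₀ V ∧ l'.sum = A + V) := by
    intro l' hl' hAl
    obtain ⟨l2, hl2⟩ := Multiset.le_iff_exists_add.1 hl'
    obtain ⟨V, hV⟩ := Multiset.le_iff_exists_add.1 hAl
    have hl'a : ∀ U ∈ l', IsAtomSeq G₀ U := fun U hU => hl U (Multiset.mem_of_le hl' hU)
    have hz : IsZeroSumSeq G₀ l'.sum := IsZeroSumSeq.msum l' (fun U hU => (hl'a U hU).1)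
    have hVz : IsZeroSumSeq G₀ V := by
      rw [hV] at hz
      exact hz.of_add hA.1.2
    obtain ⟨l3, a3, s3⟩ := fac_exists _ V rfl hVz
    have hc : Multiset.card l = Multiset.card l' + Multiset.card l2 := by rw [hl2]; simp
    have hle := hnP (l3 + l2) (by
      intro U hU
      rcases Multiset.mem_add.1 hU with h' | h'
      · exact a3 U h'
      · exact hl U (by rw [hl2]; simp [h'])) (by
      rw [hl2, Multiset.sum_add, hV] at hls
      rw [Multiset.sum_add, s3]
      have : A + (V + l2.sum) = A + (j' • A + W) := by
        rw [← add_assoc, hls]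
        simp only [Nat.succ_eq_add_one, succ_nsmul]
        abel
      exact add_left_cancel this)
    rw [Multiset.card_add] at hle
    have h30 : Multiset.card l3 ≠ 0 := by
      intro h0
      rw [Multiset.card_eq_zero] at h0
      rw [h0] at s3
      have hV0 : V = 0 := by simpa using s3.symm
      rw [hV0, add_zero] at hV
      have := atom_fac_card hA l' hl'a hV
      simp only [Nat.succ_eq_add_one] at *
      omega
    refine ⟨by simp only [Nat.succ_eq_add_one] at *; omega, fun hle' => ⟨V, ?_, hV⟩⟩
    have h31 : Multiset.card l3 = 1 := by simp only [Nat.succ_eq_add_one] at *; omega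
    obtain ⟨V', rfl⟩ := Multiset.card_eq_one.1 h31
    have : V' = V := by simpa using s3
    rw [← this]
    exact a3 V' (by simp)
  have hAl : A ≤ l.sum := by
    rw [hls, Nat.succ_eq_add_one, succ_nsmul]
    exact (Multiset.le_add_left _ _).trans (Multiset.le_add_right _ _)
  have hinter : ∀ U ∈ l, Multiset.card (A ∩ U) ≤ 1 := by
    intro U hU
    obtain ⟨l', h1, h2, h3⟩ := cover_lemma2 l A U hAl hU
    have := (hcov l' h1 h3).1
    omega
  obtain ⟨l', h1, h2, h3⟩ := cover_lemma l A hAl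
  obtain ⟨hn', hV⟩ := hcov l' h1 h3
  obtain ⟨V, hVat, hVs⟩ := hV (h2.trans hcardA)
  have hkV : 1 < crossNumber V := by
    have h := crossNumber_sum_ge l' (fun U hU => hLCN U (hl U (Multiset.mem_of_le h1 hU)))
    rw [hVs, crossNumber_add, hkA] at h
    have : (3 : ℚ) ≤ Multiset.card l' := by exact_mod_cast hn3.trans hn'
    linarith
  have hsupp : ∀ g ∈ G₀, g ∈ V := by
    intro g hg
    by_contra hgV
    have := hmiss g hg V (hVat.restrict (fun x hx => ⟨hVat.1.1 x hx, fun h' => hgV (by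
      have h'' : x = g := h'
      rw [← h'']; exact hx)⟩))
    linarith
  have hAV : A ≤ V := by
    rw [Multiset.le_iff_count]
    intro g
    by_cases hg : g ∈ A
    swap
    · rw [Multiset.count_eq_zero.2 hg]; exact Nat.zero_le _
    have hgV : 1 ≤ Multiset.count g V := Multiset.count_pos.2 (hsupp g (hA.1.1 g hg))
    have hgs : g ∈ l'.sum := Multiset.mem_of_le h3 hg
    obtain ⟨U, hU, hgU⟩ := Multiset.mem_join.1 hgs
    obtain ⟨s, hs⟩ := Multiset.exists_cons_of_mem hU
    have hnot : ¬ A ≤ s.sum := by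
      intro hle
      have hsl : s ≤ l' := by rw [hs]; exact Multiset.le_cons_self _ _
      have := (hcov s (hsl.trans h1) hle).1
      have hc : Multiset.card l' = Multiset.card s + 1 := by rw [hs]; simp
      omega
    rw [Multiset.le_iff_count] at hnot
    push Not at hnot
    obtain ⟨g', hg'⟩ := hnot
    have hg'A : g' ∈ A := Multiset.count_pos.1 (by omega)
    have hg'V : 1 ≤ Multiset.count g' V := Multiset.count_pos.2 (hsupp g' (hA.1.1 g' hg'A))
    have hcc := congrArg (Multiset.count g') hVs
    rw [hs, Multiset.sum_cons, Multiset.count_add, Multiset.count_add] at hcc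
    have hg'U : 2 ≤ Multiset.count g' U := by omega
    have hi := hinter U (Multiset.mem_of_le h1 hU)
    have hgi : g ∈ A ∩ U := Multiset.mem_inter.2 ⟨hg, hgU⟩
    have hg'i : g' ∈ A ∩ U := Multiset.mem_inter.2 ⟨hg'A, Multiset.count_pos.1 (by omega)⟩
    have heq : A ∩ U = {g} := (Multiset.eq_of_le_of_card_le (Multiset.singleton_le.2 hgi)
      (by simpa using hi)).symm
    have hgg : g' = g := by
      rw [heq] at hg'i
      simpa using hg'i
    have hc1 := congrArg (Multiset.count g) heq
    rw [Multiset.count_inter, Multiset.count_singleton_self] at hc1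
    rw [hgg] at hg'U
    omega
  have := hVat.eq_of_le hA.2.1 hA.1.2 hAV
  rw [this, hkA] at hkV
  exact lt_irrefl _ hkV
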